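/- Let m_0^{(min)} := min over a_l ∈ A_{l,n}(s) of m_0(n,l,a_l), and set c := n + ⌈−m_0^{(min)}·n⌉ + nl ∈ ℤ. Then for every M ∈ ℕ, one has b(M) ∈ A(b(M + c)). -/

import Mathlib

/-!
The proof translates the problem by a root-lattice vector until the already known case `M = 0`
applies. With `m₀ = m_0^{(min)}`, one has `c / n = 1 - m₀ + l`, so the statement leaves a gap of
`1 - m₀ + l` in every coordinate between `b(M)` and `b(M + c)`.

Round `b(M) - m₀` up to an integer vector `w`. The weight lattice modulo the root lattice
`A · ℤ^{l-1}` is cyclic of order `l`, generated by the first fundamental weight, so there are an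
integer vector `y` and `0 ≤ k < l` with `A y = w + k ε₁` (`exists_cartan_preimage`). Then
`b(M) - m₀ ≤ A y ≤ b(M + c)`. For integer points `x, x'` of `C_{b(M+c)}` this gives
`A (x - y) ≥ 0 ≥ b(0; r)`, and likewise for `x'`, so `x - y` and `x' - y` are ℤ-connected in
`C_{c'}`, where `c'` is an integer point of `A(b(0; r))` with all entries at least `m₀`.
Translating the path back by `y` puts it in `C_{c' + A y}`, which is contained in `C_{b(M)}`.
-/

/-- The Cartan matrix of `sl_l`: `A_{ii} = 2`, `A_{ij} = −1` if `|i−j| = 1`, `0` otherwise. -/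
def cartanA (l : ℕ) : Matrix (Fin (l - 1)) (Fin (l - 1)) ℝ :=
  Matrix.of fun i j => if i = j then 2 else if i.val + 1 = j.val ∨ j.val + 1 = i.val then -1 else 0

/-- The cone `C_b = {x ∈ ℝ^{l−1} : A·x ≥ b}` (inequalities componentwise). -/
def cone (l : ℕ) (b : Fin (l - 1) → ℝ) : Set (Fin (l - 1) → ℝ) :=
  {x | ∀ i, (cartanA l).mulVec x i ≥ b i}

/-- A point of `ℝ^d` with integer coordinates. -/
def IsIntPt {d : ℕ} (x : Fin d → ℝ) : Prop := ∀ i, ∃ z : ℤ, x i = (z : ℝ)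

/-- `x` and `y` are ℤ-connected in `D`: there is a finite sequence of integer points of
`D` from `x` to `y` whose consecutive differences are `±ε_j` for standard basis
vectors `ε_j`. -/
def ZConn {d : ℕ} (D : Set (Fin d → ℝ)) (x y : Fin d → ℝ) : Prop :=
  ∃ (N : ℕ) (p : ℕ → Fin d → ℝ), p 0 = x ∧ p N = y ∧
    (∀ k ≤ N, p k ∈ D ∧ IsIntPt (p k)) ∧
    ∀ k < N, ∃ j : Fin d,
      (p (k + 1) = fun m => p k m + if m = j then 1 else 0) ∨
      (p (k + 1) = fun m => p k m - if m = j then 1 else 0)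

/-- `A(b) = {c ≤ b : any two integer points of C_b are ℤ-connected in C_c}`. -/
def calA (l : ℕ) (b : Fin (l - 1) → ℝ) : Set (Fin (l - 1) → ℝ) :=
  {c | (∀ i, c i ≤ b i) ∧
    ∀ x y : Fin (l - 1) → ℝ, x ∈ cone l b → y ∈ cone l b →
      IsIntPt x → IsIntPt y → ZConn (cone l c) x y}

/-- The vector `b(M; n, l, r)` with entries `b_i^{(M)} = (M + r_{i+1} − r_i)/n`. -/
noncomputable def bvec (n l : ℕ) (r : Fin l → ℤ) (M : ℤ) : Fin (l - 1) → ℝ := fun i =>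
  ((M : ℝ) + (r ⟨i.val + 1, by have := i.isLt; omega⟩ : ℝ) -
    (r ⟨i.val, by have := i.isLt; omega⟩ : ℝ)) / (n : ℝ)

/-- The set of values `min_{1 ≤ i ≤ l−1} c_i`, where `c` ranges over the integer
points of `A(b)`. -/
def minSet (l : ℕ) (hl : 2 ≤ l) (b : Fin (l - 1) → ℝ) : Set ℤ :=
  {v | ∃ c : Fin (l - 1) → ℤ, (fun i => (c i : ℝ)) ∈ calA l b ∧
        v = Finset.univ.inf' ⟨⟨0, by omega⟩, Finset.mem_univ _⟩ c}

/-- The fundamental domain `A_{l,n}(s)`. -/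
def Adom (n l : ℕ) (hl : 2 ≤ l) (s : ℤ) : Set (Fin l → ℤ) :=
  {a | (∑ i, a i = s) ∧ (∀ i j : Fin l, i ≤ j → a j ≤ a i) ∧
       a ⟨0, by omega⟩ - a ⟨l - 1, by omega⟩ ≤ (n : ℤ)}

/-- The Cartan matrix acts as the negative discrete Laplacian with zero boundary values; here
the right boundary value is `g (l - 1) = 0` and the left one is the `if`. -/
lemma cartanA_mulVec (l : ℕ) (g : ℕ → ℝ) (hg : g (l - 1) = 0) (i : Fin (l - 1)) :
    (cartanA l).mulVec (fun j => g j.val) i =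
      2 * g i.val - g (i.val + 1) - (if i.val = 0 then 0 else g (i.val - 1)) := by
  obtain ⟨i, hi⟩ := i
  have h1 : (cartanA l).mulVec (fun j => g j.val) ⟨i, hi⟩ =
      ∑ j ∈ Finset.range (l - 1), (2 * (if i = j then g j else 0)
        - (if i + 1 = j then g j else 0) - (if j + 1 = i then g j else 0)) := by
    rw [Finset.sum_range]
    simp only [Matrix.mulVec, dotProduct, cartanA, Matrix.of_apply, Fin.ext_iff]
    refine Finset.sum_congr rfl fun j _ => ?_
    split_ifs <;> first | omega | ring
  rw [h1, Finset.sum_sub_distrib, Finset.sum_sub_distrib,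
    ← Finset.mul_sum, Finset.sum_ite_eq, Finset.sum_ite_eq]
  have h2 : (if i + 1 ∈ Finset.range (l - 1) then g (i + 1) else 0) = g (i + 1) := by
    split_ifs with h
    · rfl
    · rw [Finset.mem_range] at h
      rw [show i + 1 = l - 1 by omega, hg]
  rw [h2, if_pos (Finset.mem_range.2 hi)]
  congr 1
  rcases i with _ | i
  · simp
  · have : ∀ j, (if j + 1 = i + 1 then g j else 0) = if i = j then g j else 0 := by
      intro j
      split_ifs <;> first | omega | rfl
    simp only [this, Finset.sum_ite_eq]
    rw [if_pos (Finset.mem_range.2 (by omega))]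
    simp

/-- The solution, with zero initial values, of the second-order recurrence obtained by reading
the equation `A y = w` from the last coordinate to the first. -/
def backSol (d : ℕ) (w : ℕ → ℤ) : ℕ → ℤ
  | 0 => 0
  | 1 => 0
  | k + 2 => 2 * backSol d w (k + 1) - backSol d w k - w (d - 1 - k)

/-- Every integer vector lies in the root lattice after adding `k ∈ [0, l)` to its first
coordinate. -/
lemma exists_cartan_preimage (l : ℕ) (hl : 2 ≤ l) (w : ℕ → ℤ) :
    ∃ (y : ℕ → ℤ) (k : ℤ), 0 ≤ k ∧ k < l ∧ ∀ i : Fin (l - 1),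
      (cartanA l).mulVec (fun j => (y j.val : ℝ)) i =
        (w i.val : ℝ) + if i.val = 0 then (k : ℝ) else 0 := by
  -- Adding `q * (l - 1 - j)` to the `j`-th coordinate changes only the first entry of `A y`,
  -- by `q * l`; this reduces the error in that entry modulo `l`.
  set u := backSol (l - 1) w with hu
  have hrec : ∀ k, u (k + 2) = 2 * u (k + 1) - u k - w (l - 1 - 1 - k) := fun k => by
    rw [hu]; rfl
  have hu0 : u 0 = 0 := by rw [hu]; rfl
  have hl0 : (l : ℤ) ≠ 0 := by omega
  have hdiv := Int.emod_add_mul_ediv (u l) l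
  set q := -(u l / (l : ℤ)) with hq
  refine ⟨fun j => u (l - 1 - j) + q * ((l : ℤ) - 1 - j), u l % l, Int.emod_nonneg _ hl0,
    Int.emod_lt_of_pos _ (by omega), ?_⟩
  rintro ⟨i, hi⟩
  have hg : ((u (l - 1 - (l - 1)) + q * ((l : ℤ) - 1 - ((l - 1 : ℕ) : ℤ)) : ℤ) : ℝ) = 0 := by
    rw [Nat.sub_self, hu0, Nat.cast_sub (by omega)]
    simp
  rw [cartanA_mulVec l (fun j => ((u (l - 1 - j) + q * ((l : ℤ) - 1 - j) : ℤ) : ℝ)) hg]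
  have hr := hrec (l - 2 - i)
  rw [show l - 2 - i + 2 = l - i by omega, show l - 2 - i + 1 = l - 1 - i by omega,
    show l - 1 - 1 - (l - 2 - i) = i by omega, show l - 2 - i = l - 1 - (i + 1) by omega] at hr
  rcases i with _ | i
  · have hk : u l = u l % l - q * l := by rw [hq]; linarith
    have hrR : (u (l - 0) : ℝ) = 2 * u (l - 1 - 0) - u (l - 1 - (0 + 1)) - w 0 := by
      exact_mod_cast hr
    have hkR : (u l : ℝ) = (u l % l : ℤ) - q * l := by exact_mod_cast hk
    rw [Nat.sub_zero] at hrR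
    simp only [if_true]
    push_cast at hkR ⊢
    linarith
  · rw [show l - (i + 1) = l - 1 - (i + 1 - 1) by omega] at hr
    have hrR : (u (l - 1 - (i + 1 - 1)) : ℝ) =
        2 * u (l - 1 - (i + 1)) - u (l - 1 - (i + 1 + 1)) - w (i + 1) := by
      exact_mod_cast hr
    simp only [Nat.succ_ne_zero, if_false, Nat.add_sub_cancel] at hrR ⊢
    push_cast
    linarith

/-- ℤ-connectedness is preserved by translation by an integer vector. -/
lemma ZConn.translate {d : ℕ} {D E : Set (Fin d → ℝ)} {x x' y : Fin d → ℝ}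
    (hy : IsIntPt y) (hDE : ∀ z ∈ D, z + y ∈ E) (h : ZConn D (x - y) (x' - y)) :
    ZConn E x x' := by
  obtain ⟨N, p, h0, hN, hp, hstep⟩ := h
  refine ⟨N, fun k => p k + y, by simp [h0], by simp [hN], fun k hk => ⟨hDE _ (hp k hk).1, ?_⟩, ?_⟩
  · intro i
    obtain ⟨a, ha⟩ := (hp k hk).2 i
    obtain ⟨b, hb⟩ := hy i
    exact ⟨a + b, by simp [ha, hb]⟩
  · intro k hk
    obtain ⟨j, hj | hj⟩ := hstep k hk
    · refine ⟨j, Or.inl ?_⟩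
      funext m
      simp only [hj, Pi.add_apply]
      ring
    · refine ⟨j, Or.inr ?_⟩
      funext m
      simp only [hj, Pi.add_apply]
      ring

/-- Let `m_0(a)` be the maximum, over integer points `c` of `A(b(0; n, l, a))`, of the
minimal entry of `c`, let `m_0^{(min)}` be the minimum of `m_0(a)` over
`a ∈ A_{l,n}(s)`, and set `c := n + ⌈−m_0^{(min)}·n⌉ + nl`.  Then for every `M ∈ ℕ`
one has `b(M) ∈ A(b(M + c))`. -/
theorem stmt_15 (n l : ℕ) (hn : 2 ≤ n) (hl : 2 ≤ l) (s : ℤ)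
    (r : Fin l → ℤ) (hr : r ∈ Adom n l hl s)
    (m0 : (Fin l → ℤ) → ℤ)
    (hm0 : ∀ a ∈ Adom n l hl s, IsGreatest (minSet l hl (bvec n l a 0)) (m0 a))
    (m0min : ℤ) (hmin : IsLeast {v : ℤ | ∃ a ∈ Adom n l hl s, v = m0 a} m0min)
    (c : ℤ) (hc : c = (n : ℤ) + ⌈(-(m0min : ℝ) * (n : ℝ))⌉ + (n : ℤ) * (l : ℤ)) :
    ∀ M : ℕ, bvec n l r (M : ℤ) ∈ calA l (bvec n l r ((M : ℤ) + c)) := by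
  intro M
  have hn0 : (0 : ℝ) < n := by exact_mod_cast (by omega : 0 < n)
  obtain ⟨⟨c', hc', hmin'⟩, -⟩ := hm0 r hr
  have hle : m0min ≤ m0 r := hmin.2 ⟨r, hr, rfl⟩
  have hc'ge : ∀ i, m0min ≤ c' i := fun i =>
    hle.trans (hmin' ▸ Finset.inf'_le _ (Finset.mem_univ i))
  have hb0 : ∀ i, bvec n l r 0 i ≤ 0 := by
    intro i
    have := hr.2.1 ⟨i.val, by omega⟩ ⟨i.val + 1, by omega⟩ (by simp)
    have h' : (r ⟨i.val + 1, by omega⟩ : ℝ) ≤ r ⟨i.val, by omega⟩ := by exact_mod_cast this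
    unfold bvec
    refine div_nonpos_of_nonpos_of_nonneg ?_ hn0.le
    push_cast
    linarith
  have hm_nonpos : (m0min : ℝ) ≤ 0 := by
    have i0 : Fin (l - 1) := ⟨0, by omega⟩
    have h1 : (m0min : ℝ) ≤ c' i0 := by exact_mod_cast hc'ge i0
    exact h1.trans ((hc'.1 i0).trans (hb0 i0))
  have hcR : (c : ℝ) = n * (1 - m0min + l) := by
    have : (-(m0min : ℝ) * (n : ℝ)) = ((-m0min * n : ℤ) : ℝ) := by push_cast; ring
    rw [hc, this, Int.ceil_intCast]
    push_cast
    ring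
  have hbc : ∀ i, bvec n l r ((M : ℤ) + c) i = bvec n l r M i + (1 - m0min + l) := by
    intro i
    unfold bvec
    push_cast
    rw [hcR]
    field_simp
    ring
  have hl0 : (0 : ℝ) ≤ l := Nat.cast_nonneg l
  refine ⟨fun i => by rw [hbc]; linarith, fun x x' hx hx' hxi hxi' => ?_⟩
  obtain ⟨y, k, hk0, hkl, hy⟩ := exists_cartan_preimage l hl
    (fun i => if h : i < l - 1 then ⌈bvec n l r M ⟨i, h⟩ - m0min⌉ else 0)
  set Y : Fin (l - 1) → ℝ := fun j => (y j.val : ℝ) with hY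
  have hYint : IsIntPt Y := fun i => ⟨y i.val, rfl⟩
  have hk0' : (0 : ℝ) ≤ k := by exact_mod_cast hk0
  have hkl' : (k : ℝ) ≤ l := by exact_mod_cast hkl.le
  have hylo : ∀ i, bvec n l r M i - m0min ≤ (cartanA l).mulVec Y i := by
    intro i
    rw [hy i, dif_pos i.isLt]
    have := Int.le_ceil (bvec n l r M i - m0min)
    split_ifs <;> simp only [Fin.eta] <;> linarith
  have hyhi : ∀ i, (cartanA l).mulVec Y i ≤ bvec n l r M i - m0min + 1 + l := by
    intro i
    rw [hy i, dif_pos i.isLt]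
    have := (Int.ceil_lt_add_one (bvec n l r M i - m0min)).le
    split_ifs <;> simp only [Fin.eta] <;> linarith
  have hsub : ∀ z ∈ cone l (bvec n l r ((M : ℤ) + c)), z - Y ∈ cone l (bvec n l r 0) := by
    intro z hz i
    have h1 := hz i
    rw [hbc] at h1
    rw [Matrix.mulVec_sub, Pi.sub_apply]
    linarith [hb0 i, hyhi i]
  have hint : ∀ z : Fin (l - 1) → ℝ, IsIntPt z → IsIntPt (z - Y) := by
    intro z hz i
    obtain ⟨a, ha⟩ := hz i
    exact ⟨a - y i.val, by simp [ha, hY]⟩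
  refine ZConn.translate hYint ?_
    (hc'.2 _ _ (hsub x hx) (hsub x' hx') (hint x hxi) (hint x' hxi'))
  intro z hz i
  have h1 : (m0min : ℝ) ≤ c' i := by exact_mod_cast hc'ge i
  have h2 := hz i
  rw [Matrix.mulVec_add, Pi.add_apply]
  linarith [hylo i]
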